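/- Call an instance of the asymmetric chore division problem entitlement-divisible if for every pair of agents i, j the ratio max{w_i/w_j, w_j/w_i} is an integer. Every entitlement-divisible instance admits a 10-WMMS assignment. -/

import Mathlib

open Finset

/-- Cost of a bundle `S` of chores to agent `i`, given per-chore costs `V`. -/
noncomputable def costOf {n m : ℕ} (V : Fin n → Fin m → ℝ) (i : Fin n)
    (S : Finset (Fin m)) : ℝ :=
  ∑ b ∈ S, V i b

/-- `A` is an `n`-partition of the chores: pairwise disjoint bundles whose union
is the set of all chores. -/
def IsPartition {n m : ℕ} (A : Fin n → Finset (Fin m)) : Prop :=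
  (∀ j k, j ≠ k → Disjoint (A j) (A k)) ∧ Finset.univ.biUnion A = Finset.univ

/-- Weighted maximin share of agent `i` under entitlements `w`. -/
noncomputable def WMMS {n m : ℕ} (V : Fin n → Fin m → ℝ) (w : Fin n → ℝ)
    (i : Fin n) : ℝ :=
  sInf { x | ∃ A : Fin n → Finset (Fin m), IsPartition A ∧
    x = ⨆ j, costOf V i (A j) * (w i / w j) }

/-- Unweighted maximin share of agent `i`. -/
noncomputable def MMS {n m : ℕ} (V : Fin n → Fin m → ℝ) (i : Fin n) : ℝ :=
  sInf { x | ∃ A : Fin n → Finset (Fin m), IsPartition A ∧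
    x = ⨆ j, costOf V i (A j) }

/-- Clamp to the unit interval. -/
noncomputable def clampU (z : ℝ) : ℝ := max 0 (min 1 z)

lemma clampU_mono {a b : ℝ} (h : a ≤ b) : clampU a ≤ clampU b := by
  unfold clampU; gcongr

lemma clampU_nonneg (a : ℝ) : 0 ≤ clampU a := le_max_left _ _

lemma clampU_le_one (a : ℝ) : clampU a ≤ 1 := max_le zero_le_one (min_le_left _ _)

lemma clampU_of_nonpos {a : ℝ} (h : a ≤ 0) : clampU a = 0 :=
  max_eq_left ((min_le_right _ _).trans h)

lemma clampU_of_one_le {a : ℝ} (h : 1 ≤ a) : clampU a = 1 := by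
  unfold clampU; rw [min_eq_left h]; norm_num

lemma sum_clampU (F : ℝ) (hF : 0 ≤ F) (R : ℕ) :
    ∑ r ∈ range R, clampU (F - r) = min F R := by
  induction R with
  | zero => simp [hF]
  | succ R ih =>
    rw [sum_range_succ, ih]
    push_cast
    unfold clampU
    rcases le_total F R with h | h
    · rw [min_eq_left h, min_eq_left (a := F) (b := (R:ℝ) + 1) (by linarith),
        min_eq_right (a := (1:ℝ)) (by linarith), max_eq_left (by linarith)]; ring
    · rw [min_eq_right h]
      rcases le_total F (R + 1) with h' | h'
      · rw [min_eq_left h', min_eq_right (by linarith), max_eq_right (by linarith)]; ring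
      · rw [min_eq_right h', min_eq_left (by linarith), max_eq_right (by linarith)]

lemma rounding_lemma (n m : ℕ) (U x : Fin n → ℕ → ℝ) (B : Fin n → ℝ)
    (hU : ∀ i, Antitone (U i)) (hU0 : ∀ i k, 0 ≤ U i k)
    (hx : ∀ i k, 0 ≤ x i k) (hB0 : ∀ i, 0 ≤ B i)
    (hcov : ∀ k < m, 1 ≤ ∑ i, x i k)
    (hB : ∀ i k, 0 < x i k → U i k ≤ B i) :
    ∃ f : Fin m → Fin n, ∀ i,
      ∑ k ∈ univ.filter (fun k : Fin m => f k = i), U i k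
        ≤ B i + ∑ k ∈ range m, x i k * U i k := by
  classical
  set F : Fin n → ℕ → ℝ := fun i k => ∑ k' ∈ range k, x i k' with hF
  have hF0 : ∀ i k, 0 ≤ F i k := fun i k => sum_nonneg fun _ _ => hx _ _
  have hFm : ∀ i, Monotone (F i) := fun i => monotone_nat_of_le_succ fun k => by
    simp only [hF, sum_range_succ]; linarith [hx i k]
  obtain ⟨R, hR⟩ : ∃ R : ℕ, ∀ i, F i m ≤ R := by
    obtain ⟨R, hR⟩ := exists_nat_ge (∑ i, F i m)
    exact ⟨R, fun i => (single_le_sum (f := fun i => F i m)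
      (fun j _ => hF0 j m) (mem_univ i)).trans hR⟩
  set y : Fin n → ℕ → ℕ → ℝ := fun i k r => clampU (F i (k+1) - r) - clampU (F i k - r) with hy
  have hy0 : ∀ i k r, 0 ≤ y i k r := fun i k r =>
    sub_nonneg.2 (clampU_mono (by linarith [hFm i (Nat.le_succ k)]))
  have hyr : ∀ i, ∀ k < m, ∑ r ∈ range R, y i k r = x i k := by
    intro i k hk
    simp only [hy, sum_sub_distrib]
    rw [sum_clampU _ (hF0 _ _), sum_clampU _ (hF0 _ _),
      min_eq_left ((hFm i (by omega : k + 1 ≤ m)).trans (hR i)),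
      min_eq_left ((hFm i (by omega : k ≤ m)).trans (hR i))]
    simp [hF, sum_range_succ]
  have hyk : ∀ i r, ∑ k ∈ range m, y i k r = clampU (F i m - r) := by
    intro i r
    simp only [hy]
    rw [sum_range_sub (fun k => clampU (F i k - (r:ℝ)))]
    rw [clampU_of_nonpos (a := F i 0 - r) (by simp [hF])]; ring
  have hall := (Finset.all_card_le_biUnion_card_iff_exists_injective
    (fun k : Fin m => (univ : Finset (Fin n × Fin R)).filter
      (fun s => 0 < y s.1 k s.2))).1 (by
    intro T
    set N := T.biUnion (fun k : Fin m => (univ : Finset (Fin n × Fin R)).filter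
      (fun s => 0 < y s.1 k s.2)) with hN
    have h1 : (T.card : ℝ) ≤ ∑ k ∈ T, ∑ s : Fin n × Fin R, y s.1 k s.2 := by
      have : ∀ k ∈ T, (1:ℝ) ≤ ∑ s : Fin n × Fin R, y s.1 k s.2 := by
        intro k _
        rw [Fintype.sum_prod_type]
        refine (hcov k k.2).trans (le_of_eq (sum_congr rfl fun i _ => ?_))
        rw [← hyr i k k.2, ← Fin.sum_univ_eq_sum_range]
      simpa using sum_le_sum this
    have h2 : ∑ k ∈ T, ∑ s : Fin n × Fin R, y s.1 k s.2
        = ∑ s ∈ N, ∑ k ∈ T, y s.1 k s.2 := by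
      rw [sum_comm]
      symm
      apply sum_subset (subset_univ _)
      intro s _ hs
      apply sum_eq_zero
      intro k hk
      by_contra hne
      exact hs (mem_biUnion.2 ⟨k, hk, by
        simpa using lt_of_le_of_ne (hy0 _ _ _) (Ne.symm hne)⟩)
    have h3 : ∑ s ∈ N, ∑ k ∈ T, y s.1 k s.2 ≤ ∑ s ∈ N, (1:ℝ) := by
      apply sum_le_sum
      intro s _
      calc ∑ k ∈ T, y s.1 k s.2 ≤ ∑ k : Fin m, y s.1 k s.2 :=
            sum_le_sum_of_subset_of_nonneg (subset_univ _) fun _ _ _ => hy0 _ _ _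
        _ = ∑ k ∈ range m, y s.1 k s.2 := Fin.sum_univ_eq_sum_range (fun k => y s.1 k s.2) m
        _ ≤ 1 := by rw [hyk]; exact clampU_le_one _
    have h4 : (T.card : ℝ) ≤ N.card := by
      rw [h2] at h1; simpa using h1.trans h3
    exact_mod_cast h4)
  obtain ⟨g, hginj, hg⟩ := hall
  have hg' : ∀ k, 0 < y (g k).1 k (g k).2 := fun k => by simpa using hg k
  refine ⟨fun k => (g k).1, fun i => ?_⟩
  set h : ℕ → ℝ := fun r => Nat.casesOn r (B i) (fun r => ∑ k ∈ range m, y i k r * U i k) with hh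
  have hh0 : ∀ r, 0 ≤ h r := by
    intro r
    cases r with
    | zero => exact hB0 i
    | succ r => exact sum_nonneg fun _ _ => mul_nonneg (hy0 _ _ _) (hU0 _ _)
  have key : ∀ k ∈ univ.filter (fun k : Fin m => (g k).1 = i), U i k ≤ h (g k).2 := by
    intro k hk
    have hki : (g k).1 = i := by simpa using hk
    have hyp := hg' k
    rw [hki] at hyp
    obtain ⟨r, hr⟩ : ∃ r : ℕ, r = ((g k).2 : ℕ) := ⟨_, rfl⟩
    rw [← hr] at hyp ⊢
    have hrR : r < R := hr ▸ (g k).2.2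
    cases r with
    | zero =>
      apply hB
      rw [← hyr i k k.2]
      exact lt_of_lt_of_le hyp (single_le_sum (f := fun r => y i k r)
        (fun _ _ => hy0 _ _ _) (mem_range.2 hrR))
    | succ r =>
      change _ ≤ ∑ k ∈ range m, y i k r * U i k
      have hFk : (r:ℝ) + 1 < F i (k+1) := by
        by_contra hcon
        push Not at hcon
        have : y i k (r+1) ≤ 0 := by
          simp only [hy]
          rw [clampU_of_nonpos (a := F i (k+1) - ((r+1:ℕ):ℝ)) (by push_cast; linarith)]
          linarith [clampU_nonneg (F i k - ((r+1:ℕ):ℝ))]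
        linarith
      have hone : ∑ k ∈ range m, y i k r = 1 := by
        rw [hyk]
        apply clampU_of_one_le
        have := hFm i (by have := k.2; omega : (k:ℕ) + 1 ≤ m)
        linarith
      calc U i k = ∑ k' ∈ range m, y i k' r * U i k := by rw [← sum_mul, hone, one_mul]
        _ ≤ _ := by
          apply sum_le_sum
          intro k' _
          by_cases hkk : k' ≤ k
          · exact mul_le_mul_of_nonneg_left (hU i hkk) (hy0 _ _ _)
          · have h1 : F i (k+1) ≤ F i k' := hFm i (by omega)
            have h2 : F i k' ≤ F i (k'+1) := hFm i (by omega)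
            have : y i k' r = 0 := by
              simp only [hy]
              rw [clampU_of_one_le (by linarith), clampU_of_one_le (by linarith)]; ring
            rw [this]; simp
  calc ∑ k ∈ univ.filter (fun k : Fin m => (g k).1 = i), U i k
      ≤ ∑ k ∈ univ.filter (fun k : Fin m => (g k).1 = i), h (g k).2 := sum_le_sum key
    _ = ∑ r ∈ (univ.filter (fun k : Fin m => (g k).1 = i)).image (fun k => (g k).2), h r := by
        rw [sum_image]
        intro a ha b hb hab
        simp only [coe_filter, mem_univ, true_and, Set.mem_ofPred_eq] at ha hb
        exact hginj (Prod.ext (ha.trans hb.symm) hab)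
    _ ≤ ∑ r : Fin R, h r := sum_le_sum_of_subset_of_nonneg (subset_univ _) fun _ _ _ => hh0 _
    _ = ∑ r ∈ range R, h r := Fin.sum_univ_eq_sum_range h R
    _ ≤ ∑ r ∈ range (R+1), h r := by rw [sum_range_succ]; linarith [hh0 R]
    _ = ∑ r ∈ range R, h (r+1) + h 0 := sum_range_succ' _ _
    _ = B i + ∑ r ∈ range R, ∑ k ∈ range m, y i k r * U i k := add_comm _ _
    _ = B i + ∑ k ∈ range m, x i k * U i k := by
        rw [sum_comm]
        congr 1
        apply sum_congr rfl
        intro k hk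
        rw [← sum_mul, hyr i k (mem_range.1 hk)]

/-- total weight strictly above `t`. -/
noncomputable def wAbove {n : ℕ} (w : Fin n → ℝ) (t : ℝ) : ℝ :=
  ∑ j ∈ univ.filter (fun j => t < w j), w j

lemma frac_lemma (n m : ℕ) (U : Fin n → ℕ → ℝ) (w μ : Fin n → ℝ) (hn : 0 < n)
    (hw : ∀ i, 0 < w i) (hμ : ∀ i, 0 ≤ μ i)
    (hU : ∀ i, Antitone (U i)) (hU0 : ∀ i k, 0 ≤ U i k)
    (hT : ∀ i N, ∑ k ∈ range N, U i k ≤ μ i * ∑ j, w j)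
    (hP : ∀ i t (Q : Finset ℕ), 0 < t → (∀ k ∈ Q, μ i * t < U i k) →
      ∑ k ∈ Q, U i k ≤ μ i * wAbove w t) :
    ∃ x : Fin n → ℕ → ℝ, (∀ i k, 0 ≤ x i k) ∧ (∀ k < m, 1 ≤ ∑ i, x i k) ∧
      (∀ i k, 0 < x i k → U i k ≤ μ i * w i) ∧
      ∀ i, ∑ k ∈ range m, x i k * U i k ≤ 8 * (μ i * w i) := by
  classical
  set E : ℕ → Finset (Fin n) := fun k =>
    univ.filter (fun i => wAbove w (w i) ≤ (k + 1 : ℝ) * w i) with hE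
  have hEm : ∀ {k k' : ℕ}, k ≤ k' → E k ⊆ E k' := by
    intro k k' hkk i hi
    simp only [hE, mem_filter, mem_univ, true_and] at hi ⊢
    have : (k:ℝ) ≤ k' := by exact_mod_cast hkk
    nlinarith [hw i]
  set T : ℕ → ℝ := fun k => ∑ i ∈ E k, w i with hTd
  have hTm : Monotone T := fun k k' h =>
    sum_le_sum_of_subset_of_nonneg (hEm h) fun i _ _ => (hw i).le
  -- everyone is eventually eligible
  have hex : ∀ i, ∃ k, i ∈ E k := by
    intro i
    obtain ⟨k, hk⟩ := exists_nat_ge (wAbove w (w i) / w i)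
    refine ⟨k, ?_⟩
    simp only [hE, mem_filter, mem_univ, true_and]
    rw [div_le_iff₀ (hw i)] at hk
    nlinarith [hw i]
  set st : Fin n → ℕ := fun i => Nat.find (hex i) with hst
  have hst1 : ∀ i, i ∈ E (st i) := fun i => Nat.find_spec (hex i)
  have hst2 : ∀ i k, i ∈ E k → st i ≤ k := fun i k h => Nat.find_min' (hex i) h
  set τ : Fin n → ℝ := fun i => T (st i) with hτ
  have hτ0 : ∀ i, 0 < τ i := fun i =>
    lt_of_lt_of_le (hw i) (single_le_sum (f := w) (fun j _ => (hw j).le) (hst1 i))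
  have hTpos : ∀ k, 0 < T k := by
    intro k
    have : Nonempty (Fin n) := ⟨⟨0, hn⟩⟩
    obtain ⟨i, hi⟩ := Finite.exists_max w
    have hiE : i ∈ E k := by
      simp only [hE, mem_filter, mem_univ, true_and]
      have : wAbove w (w i) = 0 := by
        unfold wAbove
        rw [filter_eq_empty_iff.2 (fun j _ => not_lt.2 (hi j))]; simp
      rw [this]
      have := hw i
      positivity
    exact lt_of_lt_of_le (hw i) (single_le_sum (f := w) (fun j _ => (hw j).le) hiE)
  have helig : ∀ i k, i ∈ E k → U i k ≤ μ i * w i := by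
    intro i k hi
    by_contra hcon
    push Not at hcon
    simp only [hE, mem_filter, mem_univ, true_and] at hi
    have hall : ∀ k' ∈ range (k+1), μ i * w i < U i k' := fun k' hk' =>
      lt_of_lt_of_le hcon (hU i (by have := mem_range.1 hk'; omega))
    have h1 := hP i (w i) (range (k+1)) (hw i) hall
    have h2 : ∑ k' ∈ range (k+1), μ i * w i < ∑ k' ∈ range (k+1), U i k' :=
      sum_lt_sum_of_nonempty ⟨0, by simp⟩ hall
    simp only [sum_const, card_range, nsmul_eq_mul] at h2
    push_cast at h2
    have h3 := mul_le_mul_of_nonneg_left hi (hμ i)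
    nlinarith
  have hpre : ∀ i k, ∑ k' ∈ range (k+1), U i k' ≤ μ i * (2 * T k) := by
    intro i k
    by_cases hall : ∀ j, j ∈ E k
    · have : E k = univ := by ext j; simp [hall j]
      have h1 := hT i (k+1)
      have h2 : T k = ∑ j, w j := by simp only [hTd, this]
      rw [← h2] at h1
      have := mul_nonneg (hμ i) (hTpos k).le
      linarith
    · push Not at hall
      obtain ⟨j0, hj0⟩ := hall
      obtain ⟨j, hj, hjm⟩ := exists_max_image (univ.filter (fun j => j ∉ E k)) w
        ⟨j0, by simpa using hj0⟩
      have hj' : j ∉ E k := by simpa using hj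
      have hWT : wAbove w (w j) ≤ T k := by
        apply sum_le_sum_of_subset_of_nonneg
        · intro a ha
          by_contra hna
          have h1 := hjm a (by simpa using hna)
          have h2 : w j < w a := by simpa using ha
          linarith
        · intro a _ _; exact (hw a).le
      have hlt : (k + 1 : ℝ) * w j < wAbove w (w j) := by
        simpa [hE] using hj'
      have h1 := hP i (w j) ((range (k+1)).filter (fun k' => μ i * w j < U i k')) (hw j)
        (fun k' hk' => (mem_filter.1 hk').2)
      have h2 : ∑ k' ∈ (range (k+1)).filter (fun k' => ¬ μ i * w j < U i k'), U i k'
          ≤ (k+1) * (μ i * w j) := by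
        calc _ ≤ ∑ k' ∈ (range (k+1)).filter (fun k' => ¬ μ i * w j < U i k'), μ i * w j :=
              sum_le_sum fun k' hk' => not_lt.1 (mem_filter.1 hk').2
          _ ≤ ∑ k' ∈ range (k+1), μ i * w j :=
              sum_le_sum_of_subset_of_nonneg (filter_subset _ _)
                fun _ _ _ => mul_nonneg (hμ i) (hw j).le
          _ = _ := by simp
      rw [← sum_filter_add_sum_filter_not (range (k+1)) (fun k' => μ i * w j < U i k')]
      have h3 := mul_le_mul_of_nonneg_left hlt.le (hμ i)
      have h4 := mul_le_mul_of_nonneg_left hWT (hμ i)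
      nlinarith
  refine ⟨fun i k => if i ∈ E k ∧ T k ≤ 2 * τ i then 2 * w i / τ i else 0, ?_, ?_, ?_, ?_⟩
  · intro i k
    have := hw i
    have := hτ0 i
    dsimp only
    split_ifs <;> positivity
  · intro k _
    have hb : ∑ i ∈ (E k).filter (fun i => ¬ T k ≤ 2 * τ i), w i ≤ T k / 2 := by
      rcases ((E k).filter (fun i => ¬ T k ≤ 2 * τ i)).eq_empty_or_nonempty with h | h
      · rw [h, sum_empty]; exact (half_pos (hTpos k)).le
      · obtain ⟨i0, hi0, hmax⟩ := exists_max_image _ st h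
        have h1 : ∑ i ∈ (E k).filter (fun i => ¬ T k ≤ 2 * τ i), w i ≤ τ i0 :=
          sum_le_sum_of_subset_of_nonneg
            (fun a ha => hEm (hmax a ha) (hst1 a)) fun a _ _ => (hw a).le
        have h2 := (mem_filter.1 hi0).2
        push Not at h2
        linarith
    have hsplit := sum_filter_add_sum_filter_not (E k) (fun i => T k ≤ 2 * τ i) w
    have hg : T k / 2 ≤ ∑ i ∈ (E k).filter (fun i => T k ≤ 2 * τ i), w i := by
      have : ∑ i ∈ E k, w i = T k := rfl
      linarith
    calc (1:ℝ) = 2 / T k * (T k / 2) := by field_simp [(hTpos k).ne']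
      _ ≤ 2 / T k * ∑ i ∈ (E k).filter (fun i => T k ≤ 2 * τ i), w i :=
          mul_le_mul_of_nonneg_left hg (by have := hTpos k; positivity)
      _ = ∑ i ∈ (E k).filter (fun i => T k ≤ 2 * τ i), 2 * w i / T k := by
          rw [mul_sum]; exact sum_congr rfl fun i _ => by ring
      _ ≤ ∑ i ∈ (E k).filter (fun i => T k ≤ 2 * τ i), 2 * w i / τ i := by
          apply sum_le_sum
          intro i hi
          have h1 : τ i ≤ T k := hTm (hst2 i k (mem_filter.1 hi).1)
          have := hτ0 i
          have := hw i
          gcongr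
      _ = _ := by
          rw [← sum_filter]
          congr 1
          ext i; simp
  · intro i k hpos
    dsimp only at hpos
    split_ifs at hpos with h
    · exact helig i k h.1
    · exact absurd hpos (lt_irrefl _)
  · intro i
    have hc : 0 < 2 * w i / τ i := by
      have := hw i
      have := hτ0 i
      positivity
    set Q := (range m).filter (fun k => i ∈ E k ∧ T k ≤ 2 * τ i) with hQ
    have h1 : ∑ k ∈ range m, (if i ∈ E k ∧ T k ≤ 2 * τ i then 2 * w i / τ i else 0) * U i k
        = 2 * w i / τ i * ∑ k ∈ Q, U i k := by
      rw [hQ, sum_filter, mul_sum (range m)]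
      exact sum_congr rfl fun k _ => by split_ifs <;> simp
    have h2 : ∑ k ∈ Q, U i k ≤ μ i * (4 * τ i) := by
      rcases Q.eq_empty_or_nonempty with h | h
      · rw [h, sum_empty]
        have := hτ0 i
        have := hμ i
        positivity
      · have hm := Q.max'_mem h
        have h3 := hpre i (Q.max' h)
        have h4 : T (Q.max' h) ≤ 2 * τ i := (mem_filter.1 hm).2.2
        have h5 : ∑ k ∈ Q, U i k ≤ ∑ k ∈ range (Q.max' h + 1), U i k :=
          sum_le_sum_of_subset_of_nonneg
            (fun a ha => mem_range.2 (Nat.lt_succ_of_le (Q.le_max' a ha)))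
            fun _ _ _ => hU0 _ _
        have h6 := mul_le_mul_of_nonneg_left h4 (hμ i)
        linarith
    rw [h1]
    calc _ ≤ 2 * w i / τ i * (μ i * (4 * τ i)) := mul_le_mul_of_nonneg_left h2 hc.le
      _ = 8 * (μ i * w i) := by
        have := (hτ0 i).ne'
        field_simp; ring

/-- Undoing the common ordering: every position is replaced by a distinct actual chore. -/
lemma unsort_lemma (n m : ℕ) (V : Fin n → Fin m → ℝ) (σ : Fin n → Equiv.Perm (Fin m))
    (hσ : ∀ i, Antitone (fun k => V i (σ i k))) (f : Fin m → Fin n) :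
    ∃ π : Fin m → Fin m, Function.Bijective π ∧
      ∀ k, V (f k) (π k) ≤ V (f k) (σ (f k) k) := by
  classical
  obtain ⟨π, hinj, hπ⟩ := (Finset.all_card_le_biUnion_card_iff_exists_injective
    (fun k : Fin m => (Finset.Ici k).image (σ (f k)))).1 (by
    intro T
    rcases T.eq_empty_or_nonempty with h | h
    · simp [h]
    · calc T.card ≤ (Finset.Ici (T.min' h)).card :=
            card_le_card fun a ha => Finset.mem_Ici.2 (T.min'_le a ha)
        _ = ((Finset.Ici (T.min' h)).image (σ (f (T.min' h)))).card :=
            (card_image_of_injective _ (σ _).injective).symm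
        _ ≤ _ := card_le_card
            (subset_biUnion_of_mem (fun k : Fin m => (Finset.Ici k).image (σ (f k)))
              (T.min'_mem h)))
  refine ⟨π, Finite.injective_iff_bijective.1 hinj, fun k => ?_⟩
  obtain ⟨k', hk', he⟩ := mem_image.1 (hπ k)
  rw [← he]
  exact hσ (f k) (Finset.mem_Ici.1 hk')

lemma WMMS_attained {n m : ℕ} (hn : 0 < n) (V : Fin n → Fin m → ℝ) (w : Fin n → ℝ)
    (i : Fin n) : ∃ A : Fin n → Finset (Fin m), IsPartition A ∧
      ∀ j, costOf V i (A j) * (w i / w j) ≤ WMMS V w i := by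
  classical
  set s := { x | ∃ A : Fin n → Finset (Fin m), IsPartition A ∧
    x = ⨆ j, costOf V i (A j) * (w i / w j) } with hs
  have hfin : s.Finite := by
    apply (Set.finite_range (fun A : Fin n → Finset (Fin m) =>
      ⨆ j, costOf V i (A j) * (w i / w j))).subset
    rintro x ⟨A, _, rfl⟩
    exact ⟨A, rfl⟩
  have hne : s.Nonempty := by
    refine ⟨_, fun j => if j = ⟨0, hn⟩ then univ else ∅, ⟨?_, ?_⟩, rfl⟩
    · intro j k hjk
      dsimp only
      split_ifs with h1 h2
      · exact absurd (h1.trans h2.symm) hjk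
      all_goals simp
    · ext b
      simp only [mem_biUnion, mem_univ, true_and, iff_true]
      exact ⟨⟨0, hn⟩, by simp⟩
  obtain ⟨A, hA, hx⟩ := hne.csInf_mem hfin
  refine ⟨A, hA, fun j => ?_⟩
  change _ ≤ sInf s
  rw [hx]
  exact le_ciSup (f := fun j => costOf V i (A j) * (w i / w j))
    (Set.finite_range _).bddAbove j

/-- every entitlement-divisible instance admits a 10-WMMS assignment. -/
theorem exists_ten_WMMS_assignment_of_entitlementDivisible (n m : ℕ)
    (V : Fin n → Fin m → ℝ) (w : Fin n → ℝ)
    (hV : ∀ i b, 0 ≤ V i b) (hw : ∀ i, 0 < w i)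
    (hw1 : ∀ i, w i ≤ 1) (hsum : ∑ i, w i = 1)
    (hdiv : ∀ i j, ∃ k : ℤ, max (w i / w j) (w j / w i) = (k : ℝ)) :
    ∃ S : Fin n → Finset (Fin m), IsPartition S ∧
      ∀ i, costOf V i (S i) ≤ 10 * WMMS V w i := by
  classical
  have hn : 0 < n := by
    rcases Nat.eq_zero_or_pos n with h | h
    · subst h; simp at hsum
    · exact h
  choose A hA hAle using fun i => WMMS_attained hn V w i
  set μ : Fin n → ℝ := fun i => WMMS V w i / w i with hμd
  have hcost0 : ∀ i S, 0 ≤ costOf V i S := fun i S => sum_nonneg fun _ _ => hV _ _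
  have hM0 : ∀ i, 0 ≤ WMMS V w i := fun i =>
    le_trans (mul_nonneg (hcost0 i _) (div_nonneg (hw i).le (hw i).le)) (hAle i i)
  have hμ : ∀ i, 0 ≤ μ i := fun i => div_nonneg (hM0 i) (hw i).le
  have hμw : ∀ i, μ i * w i = WMMS V w i := fun i => div_mul_cancel₀ _ (hw i).ne'
  have hAμ : ∀ i j, costOf V i (A i j) ≤ μ i * w j := by
    intro i j
    have h := hAle i j
    have h1 := hw i
    have h2 := hw j
    rw [← hμw i, mul_div_assoc', div_le_iff₀ h2] at h
    have : w i * costOf V i (A i j) ≤ w i * (μ i * w j) := by linarith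
    exact le_of_mul_le_mul_left this h1
  have hitem : ∀ i (J : Finset (Fin n)) (S : Finset (Fin m)), S ⊆ J.biUnion (A i) →
      ∑ b ∈ S, V i b ≤ μ i * ∑ j ∈ J, w j := by
    intro i J S hS
    calc ∑ b ∈ S, V i b ≤ ∑ b ∈ J.biUnion (A i), V i b :=
          sum_le_sum_of_subset_of_nonneg hS fun _ _ _ => hV _ _
      _ = ∑ j ∈ J, ∑ b ∈ A i j, V i b :=
          sum_biUnion fun a _ b _ hab => (hA i).1 a b hab
      _ ≤ ∑ j ∈ J, μ i * w j := sum_le_sum fun j _ => hAμ i j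
      _ = _ := by rw [mul_sum]
  have hbig : ∀ i t (S : Finset (Fin m)), (∀ b ∈ S, μ i * t < V i b) →
      ∑ b ∈ S, V i b ≤ μ i * wAbove w t := by
    intro i t S hS
    apply hitem
    intro b hb
    have hb' : b ∈ univ.biUnion (A i) := by rw [(hA i).2]; simp
    obtain ⟨j, _, hj⟩ := mem_biUnion.1 hb'
    refine mem_biUnion.2 ⟨j, ?_, hj⟩
    have h1 : V i b ≤ μ i * w j :=
      (single_le_sum (f := V i) (fun _ _ => hV _ _) hj).trans (hAμ i j)
    have h2 := (hS b hb).trans_le h1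
    simpa using lt_of_mul_lt_mul_left h2 (hμ i)
  set σ : Fin n → Equiv.Perm (Fin m) := fun i => Tuple.sort (fun b => - V i b) with hσd
  have hσ : ∀ i, Antitone (fun k => V i (σ i k)) := by
    intro i a b hab
    have := Tuple.monotone_sort (fun b => - V i b) hab
    simp only [Function.comp] at this
    exact neg_le_neg_iff.1 this
  set U : Fin n → ℕ → ℝ := fun i k => if h : k < m then V i (σ i ⟨k, h⟩) else 0 with hUd
  have hUf : ∀ i (k : Fin m), U i k = V i (σ i k) := fun i k => by simp [hUd]
  have hU0 : ∀ i k, 0 ≤ U i k := by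
    intro i k
    simp only [hUd]
    split_ifs
    · exact hV _ _
    · exact le_rfl
  have hU : ∀ i, Antitone (U i) := by
    intro i a b hab
    by_cases hb : b < m
    · have ha : a < m := by omega
      simp only [hUd, hb, ha, dif_pos]
      exact hσ i (by simpa using hab)
    · have : U i b = 0 := by simp [hUd, hb]
      rw [this]; exact hU0 i a
  -- sums over positions become sums over chores
  have htrans : ∀ i (Q : Finset ℕ), ∃ S : Finset (Fin m),
      ∑ k ∈ Q, U i k = ∑ b ∈ S, V i b ∧ ∀ b ∈ S, ∃ k ∈ Q, U i k = V i b := by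
    intro i Q
    refine ⟨(univ.filter (fun k : Fin m => (k:ℕ) ∈ Q)).image (σ i), ?_, ?_⟩
    · rw [sum_image (fun a _ b _ h => (σ i).injective h)]
      simp only [← hUf]
      have h1 : ∑ k ∈ univ.filter (fun k : Fin m => (k:ℕ) ∈ Q), U i k
          = ∑ k ∈ (univ.filter (fun k : Fin m => (k:ℕ) ∈ Q)).image (fun k : Fin m => (k:ℕ)),
            U i k := by
        rw [sum_image (fun a _ b _ h => Fin.ext h)]
      rw [h1]
      symm
      apply sum_subset
      · intro k hk
        obtain ⟨a, ha, rfl⟩ := mem_image.1 hk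
        simpa using ha
      · intro k hk hk'
        have : ¬ k < m := fun h => hk' (mem_image.2 ⟨⟨k, h⟩, by simpa using hk, rfl⟩)
        simp [hUd, this]
    · intro b hb
      obtain ⟨k, hk, rfl⟩ := mem_image.1 hb
      exact ⟨k, by simpa using hk, hUf i k⟩
  obtain ⟨x, hx0, hcov, hxB, hxC⟩ := frac_lemma n m U w μ hn hw hμ hU hU0
    (by
      intro i N
      obtain ⟨S, hS, _⟩ := htrans i (range N)
      rw [hS]
      apply hitem
      rw [(hA i).2]; exact subset_univ _)
    (by
      intro i t Q _ hQ
      obtain ⟨S, hS, hS'⟩ := htrans i Q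
      rw [hS]
      apply hbig
      intro b hb
      obtain ⟨k, hk, he⟩ := hS' b hb
      rw [← he]; exact hQ k hk)
  obtain ⟨f, hf⟩ := rounding_lemma n m U x (fun i => μ i * w i) hU hU0 hx0
    (fun i => mul_nonneg (hμ i) (hw i).le) hcov hxB
  obtain ⟨π, hπ, hπV⟩ := unsort_lemma n m V σ hσ f
  refine ⟨fun i => (univ.filter (fun k => f k = i)).image π, ⟨?_, ?_⟩, ?_⟩
  · intro j k hjk
    rw [Finset.disjoint_left]
    intro b hb hb'
    obtain ⟨a, ha, rfl⟩ := mem_image.1 hb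
    obtain ⟨a', ha', he⟩ := mem_image.1 hb'
    have := hπ.1 he
    subst this
    simp only [mem_filter, mem_univ, true_and] at ha ha'
    exact hjk (ha.symm.trans ha')
  · ext b
    obtain ⟨k, rfl⟩ := hπ.2 b
    simp only [mem_biUnion, mem_univ, true_and, iff_true]
    exact ⟨f k, mem_image.2 ⟨k, by simp, rfl⟩⟩
  · intro i
    unfold costOf
    rw [sum_image (fun a _ b _ h => hπ.1 h)]
    have h1 : ∑ k ∈ univ.filter (fun k => f k = i), V i (π k)
        ≤ ∑ k ∈ univ.filter (fun k => f k = i), U i k := by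
      apply sum_le_sum
      intro k hk
      have hk' : f k = i := by simpa using hk
      have := hπV k
      rw [hk'] at this
      rw [hUf]; exact this
    have h2 := hf i
    have h3 := hxC i
    have h4 := hM0 i
    rw [hμw] at h3
    simp only [hμw] at h2
    linarith
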